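/- Let Ψ be a critical branching mechanism which is regularly varying at 0 with index γ ∈ (1,2]. Let (ν_t)_{t>0} be a family of nonzero finite Borel measures on (0,∞) such that φ(t,q) = ∫_{(0,∞)} (1 − e^{−qx}) ν_t(dx) satisfies ∂_t φ(t,q) = −Ψ(φ(t,q)) for all t > 0 and all q ∈ (0,∞], where φ(t,∞) := ν_t((0,∞)). Suppose there exist functions α, λ : (0,∞) → (0,∞) and a nonzero finite Borel measure ν̂ on (0,∞) such that for every bounded continuous f : (0,∞) → ℝ, α(t) ∫_{(0,∞)} f(λ(t) x) ν_t(dx) → ∫_{(0,∞)} f dν̂ as t → ∞. Then there exists ρ ∈ (0,1] such that for every fixed t > 0, the rescaled measures A ↦ α(s) ν_{st}({λ(s)^{−1} x : x ∈ A}) converge weakly as s → ∞ to the measure A ↦ t^{1/(1−γ)} ν̂({t^{1/(ρ(1−γ))} x : x ∈ A}), i.e. for every bounded continuous f : (0,∞) → ℝ, α(s) ∫ f(λ(s)x) ν_{st}(dx) → t^{1/(1−γ)} ∫ f(t^{1/(ρ(γ−1))} x) ν̂(dx) as s → ∞. -/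

import Mathlib

open MeasureTheory Set Filter

noncomputable section

lemma aux_exp_nonneg (y : ℝ) : 0 ≤ Real.exp (-y) - 1 + y := by
  have := Real.add_one_le_exp (-y); linarith

lemma aux_exp_le (y : ℝ) (hy : 0 ≤ y) : Real.exp (-y) - 1 + y ≤ min y (y ^ 2) := by
  refine le_min ?_ ?_
  · have : Real.exp (-y) ≤ 1 := Real.exp_le_one_iff.2 (by linarith)
    linarith
  · have h1 : Real.exp (-y) * (1 + y) ≤ 1 := by
      have := Real.add_one_le_exp y
      calc Real.exp (-y) * (1 + y) ≤ Real.exp (-y) * Real.exp y := by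
            gcongr; linarith
        _ = 1 := by rw [← Real.exp_add]; simp
    have h2 : Real.exp (-y) ≤ 1 / (1 + y) := by
      rw [le_div_iff₀ (by linarith)]; exact h1
    have h3 : 1 / (1 + y) ≤ 1 - y + y ^ 2 := by
      rw [div_le_iff₀ (by linarith)]; nlinarith [pow_nonneg hy 3]
    linarith

lemma aux_exp_mono {y z : ℝ} (hy : 0 ≤ y) (hyz : y ≤ z) :
    Real.exp (-y) - 1 + y ≤ Real.exp (-z) - 1 + z := by
  have h := Real.add_one_le_exp (y - z)
  have h1 : Real.exp (-z) = Real.exp (-y) * Real.exp (y - z) := by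
    rw [← Real.exp_add]; congr 1; ring
  have h2 : Real.exp (-y) ≤ 1 := Real.exp_le_one_iff.2 (by linarith)
  have h3 := Real.exp_pos (-y)
  have h4 : Real.exp (-y) * (y - z + 1) ≤ Real.exp (-y) * Real.exp (y - z) := by gcongr
  nlinarith

lemma psi_bound {U u x : ℝ} (hu : 0 < u) (huU : u ≤ U) (hx : 0 < x) :
    ‖Real.exp (-(u * x)) - 1 + u * x‖ ≤ max U (U ^ 2) * min x (x ^ 2) := by
  rw [Real.norm_of_nonneg (aux_exp_nonneg _)]
  refine (aux_exp_le (u * x) (by positivity)).trans ?_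
  rw [mul_min_of_nonneg _ _ (le_max_of_le_left (by linarith))]
  refine min_le_min ?_ ?_
  · gcongr; exact huU.trans (le_max_left _ _)
  · rw [mul_pow]; gcongr
    exact (pow_le_pow_left₀ hu.le huU 2).trans (le_max_right _ _)

lemma psi_facts (Ψ : ℝ → ℝ) (β : ℝ) (π : Measure ℝ)
    (hβ : 0 ≤ β)
    (hπfin : ∫⁻ x in Ioi (0:ℝ), ENNReal.ofReal (min x (x ^ 2)) ∂π < ⊤)
    (hΨ : ∀ u : ℝ, 0 < u →
      Ψ u = β * u ^ 2 + ∫ x in Ioi (0:ℝ), (Real.exp (-(u * x)) - 1 + u * x) ∂π)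
    (γ : ℝ)
    (hreg : ∀ x : ℝ, 0 < x →
      Tendsto (fun t => Ψ (t * x) / Ψ t) (nhdsWithin 0 (Ioi 0)) (nhds (x ^ γ))) :
    ContinuousOn Ψ (Ioi 0) ∧ ∀ u, 0 < u → 0 < Ψ u := by
  have hI : Integrable (fun x : ℝ => min x (x ^ 2)) (π.restrict (Ioi 0)) := by
    refine ⟨(by fun_prop : Continuous fun x : ℝ => min x (x ^ 2)).aestronglyMeasurable, ?_⟩
    rw [hasFiniteIntegral_iff_norm]
    refine lt_of_eq_of_lt ?_ hπfin
    refine setLIntegral_congr_fun measurableSet_Ioi fun x hx => ?_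
    have hx : 0 < x := hx
    rw [Real.norm_of_nonneg (le_min hx.le (by positivity))]
  have hint : ∀ u, 0 < u → Integrable (fun x : ℝ => Real.exp (-(u * x)) - 1 + u * x)
      (π.restrict (Ioi 0)) := by
    intro u hu
    refine (hI.const_mul (max u (u ^ 2))).mono'
      (by fun_prop : Continuous fun x : ℝ => Real.exp (-(u * x)) - 1 + u * x).aestronglyMeasurable ?_
    filter_upwards [ae_restrict_mem measurableSet_Ioi] with x hx
    exact psi_bound hu le_rfl hx
  have hnn : ∀ u, 0 < u → 0 ≤ Ψ u := by
    intro u hu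
    rw [hΨ u hu]
    have : 0 ≤ ∫ x in Ioi (0:ℝ), (Real.exp (-(u * x)) - 1 + u * x) ∂π :=
      integral_nonneg fun x => aux_exp_nonneg _
    positivity
  have hmono : ∀ u v, 0 < u → u ≤ v → Ψ u ≤ Ψ v := by
    intro u v hu huv
    rw [hΨ u hu, hΨ v (hu.trans_le huv)]
    refine add_le_add (by gcongr) ?_
    refine setIntegral_mono_on (hint u hu) (hint v (hu.trans_le huv)) measurableSet_Ioi ?_
    intro x hx
    have hx : 0 < x := hx
    exact aux_exp_mono (by positivity) (by gcongr)
  refine ⟨?_, ?_⟩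
  · have hc : ∀ u ∈ Ioi (0:ℝ), ContinuousAt
        (fun u => β * u ^ 2 + ∫ x in Ioi (0:ℝ), (Real.exp (-(u * x)) - 1 + u * x) ∂π) u := by
      intro u hu
      have hu : 0 < u := hu
      refine ContinuousAt.add (by fun_prop) ?_
      refine continuousAt_of_dominated (bound := fun x => max (2 * u) ((2 * u) ^ 2) * min x (x ^ 2))
        ?_ ?_ (hI.const_mul _) ?_
      · exact Eventually.of_forall fun v => 
          (by fun_prop : Continuous fun x : ℝ => Real.exp (-(v * x)) - 1 + v * x).aestronglyMeasurable
      · filter_upwards [Ioo_mem_nhds hu (by linarith : u < 2 * u)] with v hv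
        filter_upwards [ae_restrict_mem measurableSet_Ioi] with x hx
        exact psi_bound hv.1 hv.2.le hx
      · exact Eventually.of_forall fun x => by fun_prop
    intro u hu
    exact ((hc u hu).continuousWithinAt).congr (fun v hv => hΨ v hv) (hΨ u hu)
  · intro u hu
    refine lt_of_le_of_ne (hnn u hu) fun h0 => ?_
    have h1 := hreg 1 one_pos
    have h2 : (fun t => Ψ (t * 1) / Ψ t) =ᶠ[nhdsWithin 0 (Ioi 0)] fun _ => 0 := by
      filter_upwards [Ioo_mem_nhdsGT hu] with t ht
      have : Ψ t = 0 := le_antisymm (by rw [h0]; exact hmono t u ht.1 ht.2.le) (hnn t ht.1)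
      simp [this]
    have h3 := tendsto_nhds_unique (h1.congr' h2) tendsto_const_nhds
    simp at h3

lemma exists_G (Ψ : ℝ → ℝ) (hc : ContinuousOn Ψ (Ioi 0)) (hp : ∀ u, 0 < u → 0 < Ψ u) :
    ∃ G : ℝ → ℝ, ∀ u, 0 < u → HasDerivAt G (-(Ψ u)⁻¹) u := by
  refine ⟨fun v => - ∫ u in (1:ℝ)..v, (Ψ u)⁻¹, fun u hu => ?_⟩
  have hci : ContinuousOn (fun u => (Ψ u)⁻¹) (Ioi 0) := hc.inv₀ fun x hx => (hp x hx).ne'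
  refine HasDerivAt.neg ?_
  refine intervalIntegral.integral_hasDerivAt_right ?_ ?_ (hci.continuousAt (Ioi_mem_nhds hu))
  · refine (hci.mono ?_).intervalIntegrable
    intro x hx
    rw [mem_uIcc] at hx
    simp only [mem_Ioi]
    rcases hx with h | h <;> linarith [h.1]
  · exact hci.stronglyMeasurableAtFilter isOpen_Ioi u hu

lemma G_anti (Ψ G : ℝ → ℝ) (hp : ∀ u, 0 < u → 0 < Ψ u)
    (hG : ∀ u, 0 < u → HasDerivAt G (-(Ψ u)⁻¹) u) : StrictAntiOn G (Ioi 0) := by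
  refine strictAntiOn_of_deriv_neg (convex_Ioi 0)
    (fun u hu => (hG u hu).continuousAt.continuousWithinAt) ?_
  intro u hu
  rw [interior_Ioi] at hu
  rw [(hG u hu).deriv]
  have := hp u hu
  simpa using this

lemma G_ode (Ψ G : ℝ → ℝ) (hp : ∀ u, 0 < u → 0 < Ψ u)
    (hG : ∀ u, 0 < u → HasDerivAt G (-(Ψ u)⁻¹) u) (y : ℝ → ℝ) (hy : ∀ t, 0 < t → 0 < y t)
    (hode : ∀ t, 0 < t → HasDerivAt y (-Ψ (y t)) t) (s t : ℝ) (hs : 0 < s) (ht : 0 < t) :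
    G (y t) = G (y s) + (t - s) := by
  have hd : ∀ t, 0 < t → HasDerivAt (fun t => G (y t) - t) 0 t := by
    intro t ht
    have h := ((hG (y t) (hy t ht)).comp t (hode t ht)).sub (hasDerivAt_id t)
    have h0 := (hp _ (hy t ht)).ne'
    rw [neg_mul_neg, inv_mul_cancel₀ h0, sub_self] at h
    exact h
  have := (convex_Ioi (0:ℝ)).is_const_of_fderivWithin_eq_zero (𝕜 := ℝ) (f := fun t => G (y t) - t)
    (fun t ht => (hd t ht).differentiableAt.differentiableWithinAt) (fun t ht => by
      have h1 := (hd t ht).hasFDerivAt.hasFDerivWithinAt (s := Ioi 0)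
      rw [h1.fderivWithin (isOpen_Ioi.uniqueDiffWithinAt ht)]
      ext; simp) ht hs
  linarith

lemma G_rv_le (Ψ G : ℝ → ℝ) (hp : ∀ u, 0 < u → 0 < Ψ u)
    (hG : ∀ u, 0 < u → HasDerivAt G (-(Ψ u)⁻¹) u)
    (hGt : Tendsto G (nhdsWithin 0 (Ioi 0)) atTop) (γ : ℝ)
    (hreg : ∀ x : ℝ, 0 < x →
      Tendsto (fun t => Ψ (t * x) / Ψ t) (nhdsWithin 0 (Ioi 0)) (nhds (x ^ γ)))
    (x : ℝ) (hx : 0 < x) :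
    Tendsto (fun v => G (v * x) / G v) (nhdsWithin 0 (Ioi 0)) (nhds (x ^ (1 - γ))) := by
  have hR : Tendsto (fun t => x * (Ψ (t * x) / Ψ t)⁻¹) (nhdsWithin 0 (Ioi 0))
      (nhds (x ^ (1 - γ))) := by
    have := ((hreg x hx).inv₀ (Real.rpow_pos_of_pos hx γ).ne').const_mul x
    convert this using 2
    rw [Real.rpow_sub hx, Real.rpow_one]; rfl
  have hdG : ∀ c v, 0 < v → HasDerivAt (fun v => G (v * x) - c * G v)
      (-(Ψ (v * x))⁻¹ * x - c * (-(Ψ v)⁻¹)) v := by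
    intro c v hv
    have h1 : HasDerivAt (fun v => v * x) x v := by simpa using (hasDerivAt_id v).mul_const x
    exact ((hG (v * x) (by positivity)).comp v h1).sub ((hG v hv).const_mul c)
  have hsign : ∀ c v, 0 < v → -(Ψ (v * x))⁻¹ * x - c * (-(Ψ v)⁻¹)
      = (c - x * (Ψ (v * x) / Ψ v)⁻¹) * (Ψ v)⁻¹ := by
    intro c v hv
    have h1 := (hp v hv).ne'
    have h2 := (hp (v * x) (by positivity)).ne'
    field_simp
    ring
  rw [tendsto_order]
  constructor
  · intro b hb
    obtain ⟨c, hbc, hc⟩ := exists_between hb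
    have h1 : ∀ᶠ t in nhdsWithin 0 (Ioi (0:ℝ)), c < x * (Ψ (t * x) / Ψ t)⁻¹ :=
      hR.eventually (lt_mem_nhds hc)
    obtain ⟨δ, hδ, hδ'⟩ := mem_nhdsGT_iff_exists_Ioo_subset.1 h1
    have hδ : 0 < δ := hδ
    have hmono : AntitoneOn (fun v => G (v * x) - c * G v) (Ioo 0 δ) := by
      refine antitoneOn_of_deriv_nonpos (convex_Ioo 0 δ) (fun v hv =>
        (hdG c v hv.1).continuousAt.continuousWithinAt) ?_ ?_
      · intro v hv; rw [interior_Ioo] at hv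
        exact (hdG c v hv.1).differentiableAt.differentiableWithinAt
      · intro v hv; rw [interior_Ioo] at hv
        rw [(hdG c v hv.1).deriv, hsign c v hv.1]
        have := hδ' hv
        simp only [mem_ofPred_eq] at this
        have h2 := hp v hv.1
        exact mul_nonpos_of_nonpos_of_nonneg (by linarith) (by positivity)
    set K := G (δ / 2 * x) - c * G (δ / 2) with hK
    have hlim : Tendsto (fun v => c + K / G v) (nhdsWithin 0 (Ioi 0)) (nhds (c + 0)) :=
      (hGt.const_div_atTop K).const_add c
    rw [add_zero] at hlim
    filter_upwards [hlim.eventually (lt_mem_nhds hbc), hGt.eventually_gt_atTop 0,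
      Ioo_mem_nhdsGT (half_pos hδ)] with v h3 h4 h5
    refine h3.trans_le ?_
    have h6 : G (δ / 2 * x) - c * G (δ / 2) ≤ G (v * x) - c * G v :=
      hmono ⟨h5.1, by linarith [h5.2]⟩ ⟨by linarith, by linarith⟩ h5.2.le
    rw [le_div_iff₀ h4, add_mul, div_mul_cancel₀ _ h4.ne']
    linarith
  · intro b hb
    obtain ⟨c, hc, hbc⟩ := exists_between hb
    have h1 : ∀ᶠ t in nhdsWithin 0 (Ioi (0:ℝ)), x * (Ψ (t * x) / Ψ t)⁻¹ < c :=
      hR.eventually (gt_mem_nhds hc)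
    obtain ⟨δ, hδ, hδ'⟩ := mem_nhdsGT_iff_exists_Ioo_subset.1 h1
    have hδ : 0 < δ := hδ
    have hmono : MonotoneOn (fun v => G (v * x) - c * G v) (Ioo 0 δ) := by
      refine monotoneOn_of_deriv_nonneg (convex_Ioo 0 δ) (fun v hv =>
        (hdG c v hv.1).continuousAt.continuousWithinAt) ?_ ?_
      · intro v hv; rw [interior_Ioo] at hv
        exact (hdG c v hv.1).differentiableAt.differentiableWithinAt
      · intro v hv; rw [interior_Ioo] at hv
        rw [(hdG c v hv.1).deriv, hsign c v hv.1]
        have := hδ' hv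
        simp only [mem_ofPred_eq] at this
        have h2 := hp v hv.1
        exact mul_nonneg (by linarith) (by positivity)
    set K := G (δ / 2 * x) - c * G (δ / 2) with hK
    have hlim : Tendsto (fun v => c + K / G v) (nhdsWithin 0 (Ioi 0)) (nhds (c + 0)) :=
      (hGt.const_div_atTop K).const_add c
    rw [add_zero] at hlim
    filter_upwards [hlim.eventually (gt_mem_nhds hbc), hGt.eventually_gt_atTop 0,
      Ioo_mem_nhdsGT (half_pos hδ)] with v h3 h4 h5
    refine lt_of_le_of_lt ?_ h3
    have h6 : G (v * x) - c * G v ≤ G (δ / 2 * x) - c * G (δ / 2) :=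
      hmono ⟨h5.1, by linarith [h5.2]⟩ ⟨by linarith, by linarith⟩ h5.2.le
    rw [div_le_iff₀ h4, add_mul, div_mul_cancel₀ _ h4.ne']
    linarith

/-- uniform regular variation along a filter -/
lemma G_rv_unif {G : ℝ → ℝ} (hanti : StrictAntiOn G (Ioi 0))
    (hGt : Tendsto G (nhdsWithin 0 (Ioi 0)) atTop) {γ : ℝ}
    (hrv : ∀ x : ℝ, 0 < x →
      Tendsto (fun v => G (v * x) / G v) (nhdsWithin 0 (Ioi 0)) (nhds (x ^ (1 - γ))))
    {l : Filter ℝ} {v w : ℝ → ℝ} (hv : Tendsto v l (nhdsWithin 0 (Ioi 0))) {x : ℝ} (hx : 0 < x)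
    (hw : Tendsto (fun s => w s / v s) l (nhds x)) :
    Tendsto (fun s => G (w s) / G (v s)) l (nhds (x ^ (1 - γ))) := by
  have hvpos : ∀ᶠ s in l, 0 < v s := hv.eventually self_mem_nhdsWithin
  have hGpos : ∀ᶠ s in l, 0 < G (v s) := (hGt.comp hv).eventually_gt_atTop 0
  have hcont : ContinuousAt (fun y : ℝ => y ^ (1 - γ)) x :=
    Real.continuousAt_rpow_const _ _ (Or.inl hx.ne')
  rw [tendsto_order]
  constructor
  · intro b hb
    have h1 : ∀ᶠ y in nhdsWithin x (Ioi x), b < y ^ (1 - γ) :=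
      (hcont.eventually (lt_mem_nhds hb)).filter_mono nhdsWithin_le_nhds
    obtain ⟨y, hy, hxy⟩ := (h1.and self_mem_nhdsWithin).exists
    have hxy : x < y := hxy
    have h2 := ((hrv y (hx.trans hxy)).comp hv).eventually (lt_mem_nhds hy)
    filter_upwards [h2, hw.eventually (gt_mem_nhds hxy), hw.eventually (lt_mem_nhds hx), hvpos, hGpos]
      with s h3 h4 h5 h6 h7
    refine lt_of_lt_of_le h3 ?_
    simp only [Function.comp]
    rw [div_lt_iff₀ h6] at h4
    have hwp : 0 < w s := by simpa [div_pos_iff, h6, h6.not_gt] using h5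
    have := hanti.antitoneOn (a := w s) (b := v s * y) hwp (by simp only [mem_Ioi]; nlinarith) (by linarith)
    gcongr
  · intro b hb
    have h1 : ∀ᶠ y in nhdsWithin x (Iio x), y ^ (1 - γ) < b :=
      (hcont.eventually (gt_mem_nhds hb)).filter_mono nhdsWithin_le_nhds
    obtain ⟨y, ⟨hy, hxy⟩, hy0⟩ := ((h1.and self_mem_nhdsWithin).and
      ((lt_mem_nhds hx).filter_mono nhdsWithin_le_nhds)).exists
    have hxy : y < x := hxy
    have h2 := ((hrv y hy0).comp hv).eventually (gt_mem_nhds hy)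
    filter_upwards [h2, hw.eventually (lt_mem_nhds hxy), hvpos, hGpos]
      with s h3 h4 h6 h7
    refine lt_of_le_of_lt ?_ h3
    simp only [Function.comp]
    rw [lt_div_iff₀ h6] at h4
    have hwp : 0 < v s * y := by positivity
    have := hanti.antitoneOn (a := v s * y) (b := w s) hwp (by simp only [mem_Ioi]; nlinarith) (by linarith)
    gcongr

/-- inverse statement -/
lemma G_rv_inv {G : ℝ → ℝ} (hanti : StrictAntiOn G (Ioi 0))
    (hGt : Tendsto G (nhdsWithin 0 (Ioi 0)) atTop) {γ : ℝ} (hγ : 1 < γ)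
    (hrv : ∀ x : ℝ, 0 < x →
      Tendsto (fun v => G (v * x) / G v) (nhdsWithin 0 (Ioi 0)) (nhds (x ^ (1 - γ))))
    {l : Filter ℝ} {v w : ℝ → ℝ} (hv : Tendsto v l (nhdsWithin 0 (Ioi 0)))
    (hwp : ∀ᶠ s in l, 0 < w s) {L : ℝ} (hL : 0 < L)
    (hw : Tendsto (fun s => G (w s) / G (v s)) l (nhds L)) :
    Tendsto (fun s => w s / v s) l (nhds (L ^ (1 / (1 - γ)))) := by
  have hvpos : ∀ᶠ s in l, 0 < v s := hv.eventually self_mem_nhdsWithin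
  have hGpos : ∀ᶠ s in l, 0 < G (v s) := (hGt.comp hv).eventually_gt_atTop 0
  set x := L ^ (1 / (1 - γ)) with hxdef
  have hx : 0 < x := Real.rpow_pos_of_pos hL _
  have hxL : x ^ (1 - γ) = L := by
    rw [hxdef, ← Real.rpow_mul hL.le, one_div, inv_mul_cancel₀ (by linarith), Real.rpow_one]
  rw [tendsto_order]
  constructor
  · intro b hb
    obtain ⟨y, hby, hyx⟩ := exists_between (max_lt hb hx)
    have hy0 : 0 < y := (le_max_right _ _).trans_lt hby
    have hby : b < y := (le_max_left _ _).trans_lt hby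
    have h1 : L < y ^ (1 - γ) := by
      rw [← hxL]; exact Real.rpow_lt_rpow_of_neg hy0 hyx (by linarith)
    filter_upwards [hw.eventually_lt ((hrv y hy0).comp hv) h1, hvpos, hGpos, hwp] with s h2 h3 h4 h5
    simp only [Function.comp] at h2
    rw [div_lt_div_iff_of_pos_right h4] at h2
    have : v s * y < w s := (hanti.lt_iff_gt h5 (by simp only [mem_Ioi]; positivity)).1 h2
    rw [lt_div_iff₀ h3]; nlinarith
  · intro b hb
    have hb0 : 0 < b := hx.trans hb
    have h1 : b ^ (1 - γ) < L := by
      rw [← hxL]; exact Real.rpow_lt_rpow_of_neg hx hb (by linarith)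
    filter_upwards [((hrv b hb0).comp hv).eventually_lt hw h1, hvpos, hGpos, hwp] with s h2 h3 h4 h5
    simp only [Function.comp] at h2
    rw [div_lt_div_iff_of_pos_right h4] at h2
    have : w s < v s * b := (hanti.lt_iff_gt (by simp only [mem_Ioi]; positivity) h5).1 h2
    rw [div_lt_iff₀ h3]; linarith

/-- Laplace exponent -/
def lapl (μ : Measure ℝ) (q : ℝ) : ℝ := ∫ x in Ioi (0:ℝ), (1 - Real.exp (-(q * x))) ∂μ

lemma lapl_fbound {q x : ℝ} (hq : 0 ≤ q) (hx : 0 < x) : |1 - Real.exp (-(q * x))| ≤ 1 := by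
  have h1 : Real.exp (-(q * x)) ≤ 1 := Real.exp_le_one_iff.2 (by nlinarith)
  have h2 := Real.exp_pos (-(q * x))
  rw [abs_le]; constructor <;> linarith

lemma lapl_int (μ : Measure ℝ) [IsFiniteMeasure μ] {q : ℝ} (hq : 0 ≤ q) :
    Integrable (fun x => 1 - Real.exp (-(q * x))) (μ.restrict (Ioi 0)) := by
  refine (integrable_const (1:ℝ)).mono'
    (by fun_prop : Continuous fun x : ℝ => 1 - Real.exp (-(q * x))).aestronglyMeasurable ?_
  filter_upwards [ae_restrict_mem measurableSet_Ioi] with x hx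
  exact lapl_fbound hq hx

lemma setInt_lt (μ : Measure ℝ) (h0 : μ (Ioi 0) ≠ 0) {f g : ℝ → ℝ}
    (hf : Integrable f (μ.restrict (Ioi 0))) (hg : Integrable g (μ.restrict (Ioi 0)))
    (hfg : ∀ x, 0 < x → f x < g x) :
    ∫ x in Ioi (0:ℝ), f x ∂μ < ∫ x in Ioi (0:ℝ), g x ∂μ := by
  have h : 0 < ∫ x in Ioi (0:ℝ), (g x - f x) ∂μ := by
    rw [integral_pos_iff_support_of_nonneg_ae]
    · have : μ.restrict (Ioi 0) (Ioi 0) ≤ μ.restrict (Ioi 0) (Function.support fun x => g x - f x) := by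
        refine measure_mono fun x hx => ?_
        have := hfg x hx
        simp only [Function.mem_support]; linarith
      refine lt_of_lt_of_le ?_ this
      rw [Measure.restrict_apply_self]
      exact pos_iff_ne_zero.2 h0
    · filter_upwards [ae_restrict_mem measurableSet_Ioi] with x hx
      have := hfg x hx
      simp only [Pi.zero_apply]; linarith
    · exact hg.sub hf
  rw [integral_sub hg hf] at h
  linarith

lemma lapl_strictMono (μ : Measure ℝ) [IsFiniteMeasure μ] (h0 : μ (Ioi 0) ≠ 0) {p q : ℝ}
    (hp : 0 ≤ p) (hpq : p < q) : lapl μ p < lapl μ q := by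
  refine setInt_lt μ h0 (lapl_int μ hp) (lapl_int μ (hp.trans hpq.le)) fun x hx => ?_
  have : Real.exp (-(q * x)) < Real.exp (-(p * x)) := Real.exp_lt_exp.2 (by nlinarith)
  linarith

lemma lapl_zero (μ : Measure ℝ) : lapl μ 0 = 0 := by simp [lapl]

lemma lapl_pos (μ : Measure ℝ) [IsFiniteMeasure μ] (h0 : μ (Ioi 0) ≠ 0) {q : ℝ}
    (hq : 0 < q) : 0 < lapl μ q := by
  rw [← lapl_zero μ]; exact lapl_strictMono μ h0 le_rfl hq

lemma mass_eq (μ : Measure ℝ) : ∫ _ in Ioi (0:ℝ), (1:ℝ) ∂μ = (μ (Ioi 0)).toReal := by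
  simp [Measure.real]

lemma lapl_lt_mass (μ : Measure ℝ) [IsFiniteMeasure μ] (h0 : μ (Ioi 0) ≠ 0) {q : ℝ}
    (hq : 0 ≤ q) : lapl μ q < (μ (Ioi 0)).toReal := by
  rw [← mass_eq]
  refine setInt_lt μ h0 (lapl_int μ hq) (integrable_const _) fun x hx => ?_
  have := Real.exp_pos (-(q * x))
  linarith

lemma lapl_contOn (μ : Measure ℝ) [IsFiniteMeasure μ] : ContinuousOn (lapl μ) (Ici 0) := by
  refine continuousOn_of_dominated (bound := fun _ => (1:ℝ)) ?_ ?_ (integrable_const _) ?_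
  · exact fun v _ => 
      (by fun_prop : Continuous fun x : ℝ => 1 - Real.exp (-(v * x))).aestronglyMeasurable
  · intro v hv
    filter_upwards [ae_restrict_mem measurableSet_Ioi] with x hx
    exact lapl_fbound hv hx
  · exact Eventually.of_forall fun x => by fun_prop

lemma lapl_tendsto_mass (μ : Measure ℝ) [IsFiniteMeasure μ] :
    Tendsto (lapl μ) atTop (nhds (μ (Ioi 0)).toReal) := by
  rw [← mass_eq]
  refine tendsto_integral_filter_of_dominated_convergence (fun _ => (1:ℝ)) ?_ ?_ (integrable_const _) ?_
  · exact Eventually.of_forall fun v => 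
      (by fun_prop : Continuous fun x : ℝ => 1 - Real.exp (-(v * x))).aestronglyMeasurable
  · filter_upwards [eventually_ge_atTop 0] with v hv
    filter_upwards [ae_restrict_mem measurableSet_Ioi] with x hx
    exact lapl_fbound hv hx
  · filter_upwards [ae_restrict_mem measurableSet_Ioi] with x hx
    have hx : 0 < x := hx
    have : Tendsto (fun n : ℝ => Real.exp (-(n * x))) atTop (nhds 0) :=
      Real.tendsto_exp_neg_atTop_nhds_zero.comp (tendsto_id.atTop_mul_const hx)
    simpa using this.const_sub 1

lemma lapl_concave (μ : Measure ℝ) [IsFiniteMeasure μ] {q : ℝ} (hq : 0 ≤ q) (hq1 : q ≤ 1) :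
    q * lapl μ 1 ≤ lapl μ q := by
  unfold lapl
  rw [← integral_const_mul]
  refine integral_mono ((lapl_int μ zero_le_one).const_mul q) (lapl_int μ hq) fun x => ?_
  have h := convexOn_exp.2 (mem_univ (-x)) (mem_univ 0) hq (by linarith : (0:ℝ) ≤ 1 - q) (by ring)
  simp only [smul_eq_mul, mul_zero, add_zero, Real.exp_zero, mul_one, mul_neg] at h
  simp only [one_mul]
  linarith

/-- monotone inversion of limits -/
lemma mono_inv {g : ℝ → ℝ → ℝ} {H : ℝ → ℝ} {κ : ℝ → ℝ} {r : ℝ} (hr : 0 < r)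
    (hg : ∀ᶠ s in atTop, AntitoneOn (g s) (Ioi 0)) (hκ : ∀ᶠ s in atTop, 0 < κ s)
    (hH : StrictAntiOn H (Ioi 0))
    (hlim : ∀ q, 0 < q → Tendsto (fun s => g s q) atTop (nhds (H q)))
    (hk : Tendsto (fun s => g s (κ s)) atTop (nhds (H r))) :
    Tendsto κ atTop (nhds r) := by
  rw [tendsto_order]
  constructor
  · intro b hb
    obtain ⟨y, hby, hyx⟩ := exists_between (max_lt hb hr)
    have hy0 : 0 < y := (le_max_right _ _).trans_lt hby
    have hby : b < y := (le_max_left _ _).trans_lt hby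
    filter_upwards [hk.eventually_lt (hlim y hy0) (hH hy0 hr hyx), hg, hκ] with s h1 h2 h3
    refine hby.trans ?_
    by_contra! h
    exact absurd (h2 h3 hy0 h) (not_le.2 h1)
  · intro b hb
    have hb0 : 0 < b := hr.trans hb
    filter_upwards [(hlim b hb0).eventually_lt hk (hH hr hb0 hb), hg, hκ] with s h1 h2 h3
    by_contra! h
    exact absurd (h2 hb0 h3 h) (not_le.2 h1)

/-- multiplicative functional equation -/
lemma mult_power {T : ℝ → ℝ} (hpos : ∀ q, 0 < q → 0 < T q) (hc : ContinuousOn T (Ioi 0))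
    (hanti : StrictAntiOn T (Ioi 0)) (hmul : ∀ p q, 0 < p → 0 < q → T (p * q) = T p * T q) :
    ∃ c : ℝ, 0 < c ∧ ∀ q, 0 < q → T q = q ^ (-c) := by
  let L : ℝ →+ ℝ := AddMonoidHom.mk' (fun x => Real.log (T (Real.exp x))) (by
    intro a b
    rw [Real.exp_add, hmul _ _ (Real.exp_pos a) (Real.exp_pos b),
      Real.log_mul (hpos _ (Real.exp_pos _)).ne' (hpos _ (Real.exp_pos _)).ne'])
  have hL : Continuous L := by
    change Continuous (fun x => Real.log (T (Real.exp x)))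
    refine Continuous.log ?_ fun x => (hpos _ (Real.exp_pos _)).ne'
    exact hc.comp_continuous Real.continuous_exp fun x => Real.exp_pos x
  have hlin : ∀ x, L x = x * L 1 := by
    intro x
    have := (L.toRealLinearMap hL).map_smul x 1
    simpa using this
  have hT : ∀ q, 0 < q → T q = q ^ (L 1) := by
    intro q hq
    have h1 := hlin (Real.log q)
    have h2 : L (Real.log q) = Real.log (T q) := by
      change Real.log (T (Real.exp (Real.log q))) = _
      rw [Real.exp_log hq]
    rw [h2] at h1
    rw [Real.rpow_def_of_pos hq, ← h1, Real.exp_log (hpos q hq)]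
  refine ⟨-(L 1), ?_, fun q hq => by rw [neg_neg]; exact hT q hq⟩
  have h := hanti (a := 1) (b := 2) (by simp) (by simp) one_lt_two
  rw [hT 1 one_pos, hT 2 two_pos, Real.one_rpow] at h
  by_contra! hneg
  have := Real.one_le_rpow (one_le_two : (1:ℝ) ≤ 2) (by linarith : 0 ≤ L 1)
  linarith

/-- cutoff -/
def chi (n : ℕ) (y : ℝ) : ℝ := min (max 0 (n * y - 1)) 1 * min (max 0 (n + 1 - y)) 1

lemma chi_cont (n : ℕ) : Continuous (chi n) := by unfold chi; fun_prop

lemma chi_nonneg (n : ℕ) (y : ℝ) : 0 ≤ chi n y :=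
  mul_nonneg (le_min (le_max_left _ _) zero_le_one) (le_min (le_max_left _ _) zero_le_one)

lemma chi_le (n : ℕ) (y : ℝ) : chi n y ≤ 1 :=
  mul_le_one₀ (min_le_right _ _) (le_min (le_max_left _ _) zero_le_one) (min_le_right _ _)

lemma chi_zero {n : ℕ} {y : ℝ} (hy : 0 < y) (h : y ∉ Icc (1 / (n + 1 : ℝ)) (n + 1)) : chi n y = 0 := by
  unfold chi
  by_cases h1 : (n:ℝ) + 1 < y
  · have : max 0 ((n:ℝ) + 1 - y) = 0 := max_eq_left (by linarith)
    simp [this]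
  · have h2 : y < 1 / (n + 1 : ℝ) := by
      by_contra! h3
      exact h ⟨h3, not_lt.1 h1⟩
    rw [lt_div_iff₀ (by positivity)] at h2
    have : max 0 ((n:ℝ) * y - 1) = 0 := max_eq_left (by nlinarith)
    simp [this]

lemma chi_eq_one {y : ℝ} (hy : 0 < y) : ∀ᶠ n : ℕ in atTop, chi n y = 1 := by
  have h1 : ∀ᶠ n : ℕ in atTop, y ≤ n := tendsto_natCast_atTop_atTop.eventually_ge_atTop y
  have h2 : ∀ᶠ n : ℕ in atTop, 2 / y ≤ n := tendsto_natCast_atTop_atTop.eventually_ge_atTop _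
  filter_upwards [h1, h2] with n h1 h2
  rw [div_le_iff₀ hy] at h2
  unfold chi
  rw [min_eq_right (le_max_of_le_right (by linarith)), min_eq_right (le_max_of_le_right (by linarith)), one_mul]

lemma chi_int (μ : Measure ℝ) [IsFiniteMeasure μ] :
    Tendsto (fun n => ∫ x in Ioi (0:ℝ), (1 - chi n x) ∂μ) atTop (nhds 0) := by
  suffices h : Tendsto (fun n => ∫ x in Ioi (0:ℝ), (1 - chi n x) ∂μ) atTop
      (nhds (∫ x in Ioi (0:ℝ), (0:ℝ) ∂μ)) by simpa using h
  refine tendsto_integral_filter_of_dominated_convergence (fun _ => (1:ℝ)) ?_ ?_ (integrable_const _) ?_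
  · exact Eventually.of_forall fun n => (continuous_const.sub (chi_cont n)).aestronglyMeasurable
  · refine Eventually.of_forall fun n => Eventually.of_forall fun x => ?_
    have h1 := chi_nonneg n x
    have h2 := chi_le n x
    rw [Real.norm_eq_abs, abs_le]; constructor <;> linarith
  · filter_upwards [ae_restrict_mem measurableSet_Ioi] with x hx
    refine tendsto_const_nhds.congr' ?_
    filter_upwards [chi_eq_one hx] with n hn
    rw [hn]; simp

/-- local uniform closeness of dilations -/
lemma dil_unif {f : ℝ → ℝ} (hf : ContinuousOn f (Ioi 0)) {k : ℝ} (hk : 0 < k) {A B ε : ℝ} (hA : 0 < A)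
    (hε : 0 < ε) : ∀ᶠ k' in nhds k, ∀ y ∈ Icc A B, |f (k' * y) - f (k * y)| ≤ ε := by
  have hc : ContinuousOn (fun p : ℝ × ℝ => f (p.1 * p.2)) (Icc (k / 2) (2 * k) ×ˢ Icc A B) := by
    refine hf.comp (by fun_prop) ?_
    rintro ⟨p, q⟩ ⟨hp, hq⟩
    have : 0 < p := by have := hp.1; simp only at this; linarith
    have : 0 < q := hA.trans_le hq.1
    simp only [mem_Ioi]; positivity
  have hu := (isCompact_Icc.prod isCompact_Icc).uniformContinuousOn_of_continuous hc
  rw [Metric.uniformContinuousOn_iff_le] at hu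
  obtain ⟨δ, hδ, h⟩ := hu ε hε
  filter_upwards [Metric.closedBall_mem_nhds k hδ, Icc_mem_nhds (by linarith : k / 2 < k)
    (by linarith : k < 2 * k)] with k' h1 h2 y hy
  have := h (k', y) ⟨h2, hy⟩ (k, y) ⟨⟨by simp only; linarith, by simp only; linarith⟩, hy⟩ (by
    rw [Prod.dist_eq]; simpa [hδ.le] using h1)
  simpa [Real.dist_eq] using this

lemma moving_weak (ν : ℝ → Measure ℝ)
    (hfin : ∀ t : ℝ, 0 < t → IsFiniteMeasure (ν t))
    (a lam : ℝ → ℝ) (ha : ∀ t : ℝ, 0 < t → 0 < a t) (hlam : ∀ t : ℝ, 0 < t → 0 < lam t)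
    (νhat : Measure ℝ) [IsFiniteMeasure νhat]
    (hlim : ∀ f : ℝ → ℝ, ContinuousOn f (Ioi 0) →
      (∃ M : ℝ, ∀ x ∈ Ioi (0:ℝ), |f x| ≤ M) →
      Tendsto (fun t => a t * ∫ x in Ioi (0:ℝ), f (lam t * x) ∂(ν t)) atTop
        (nhds (∫ x in Ioi (0:ℝ), f x ∂νhat)))
    (f : ℝ → ℝ) (hf : ContinuousOn f (Ioi 0)) (hfb : ∃ M : ℝ, ∀ x ∈ Ioi (0:ℝ), |f x| ≤ M)
    (κ : ℝ → ℝ) (hκ : ∀ t, 0 < t → 0 < κ t) (k : ℝ) (hk : 0 < k) (hκk : Tendsto κ atTop (nhds k)) :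
    Tendsto (fun t => a t * ∫ x in Ioi (0:ℝ), f (κ t * (lam t * x)) ∂(ν t)) atTop
        (nhds (∫ x in Ioi (0:ℝ), f (k * x) ∂νhat)) := by
  obtain ⟨M, hM⟩ := hfb
  have hM0 : 0 ≤ M := (abs_nonneg _).trans (hM 1 (by simp))
  have hdil : ∀ c, 0 < c → ContinuousOn (fun x => f (c * x)) (Ioi 0) := fun c hc =>
    hf.comp (by fun_prop) fun x hx => mul_pos hc hx
  have hint : ∀ t c, 0 < t → 0 < c → Integrable (fun x => f (c * x)) ((ν t).restrict (Ioi 0)) := by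
    intro t c ht hc
    have := hfin t ht
    refine (integrable_const M).mono' ((hdil c hc).aestronglyMeasurable measurableSet_Ioi) ?_
    filter_upwards [ae_restrict_mem measurableSet_Ioi] with x hx
    exact hM _ (mul_pos hc hx)
  have h1 := hlim (fun x => f (k * x)) (hdil k hk) ⟨M, fun x hx => hM _ (mul_pos hk hx)⟩
  suffices hd : Tendsto (fun t => a t * (∫ x in Ioi (0:ℝ), f (κ t * (lam t * x)) ∂(ν t))
      - a t * ∫ x in Ioi (0:ℝ), f (k * (lam t * x)) ∂(ν t)) atTop (nhds 0) by
    simpa using hd.add h1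
  have hmass := hlim (fun _ => 1) continuousOn_const ⟨1, fun x _ => by simp⟩
  set m := ∫ x in Ioi (0:ℝ), (1:ℝ) ∂νhat with hm
  have hm0 : 0 ≤ m := integral_nonneg fun _ => zero_le_one
  rw [Metric.tendsto_atTop']
  intro ε hε
  -- choose cutoff
  have hη : 0 < ε / (2 * (2 * M + 1)) := by positivity
  obtain ⟨n, hn⟩ := ((chi_int νhat).eventually (gt_mem_nhds hη)).exists
  have hchi := hlim (fun x => 1 - chi n x) (continuous_const.sub (chi_cont n)).continuousOn
    ⟨1, fun x _ => by
      have h1 := chi_nonneg n x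
      have h2 := chi_le n x
      rw [abs_le]; constructor <;> linarith⟩
  have hθ : 0 < ε / (2 * (m + 1)) := by positivity
  have hev := (hmass.eventually (gt_mem_nhds (by linarith : m < m + 1))).and
    ((hchi.eventually (gt_mem_nhds hn)).and
    ((hκk.eventually (dil_unif hf hk (A := 1 / (n + 1 : ℝ)) (B := n + 1) (by positivity) hθ)).and
    (eventually_gt_atTop 0)))
  obtain ⟨N, hN⟩ := (hev.and (eventually_ge_atTop 0)).exists_forall_of_atTop
  refine ⟨N, fun t ht => ?_⟩
  obtain ⟨⟨e1, e2, e3, e4⟩, -⟩ := hN t ht.le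
  have := hfin t e4
  have hat := ha t e4
  have hlt := hlam t e4
  have hκt := hκ t e4
  rw [dist_zero_right, ← mul_sub]
  have hi1 : Integrable (fun x => f (κ t * (lam t * x))) ((ν t).restrict (Ioi 0)) := by
    simpa [mul_assoc] using hint t (κ t * lam t) e4 (by positivity)
  have hi2 : Integrable (fun x => f (k * (lam t * x))) ((ν t).restrict (Ioi 0)) := by
    simpa [mul_assoc] using hint t (k * lam t) e4 (by positivity)
  have hi3 : Integrable (fun x => 1 - chi n (lam t * x)) ((ν t).restrict (Ioi 0)) := by
    refine (integrable_const (1:ℝ)).mono'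
      (continuous_const.sub ((chi_cont n).comp (by fun_prop))).aestronglyMeasurable
      (Eventually.of_forall fun x => ?_)
    have h1 := chi_nonneg n (lam t * x)
    have h2 := chi_le n (lam t * x)
    rw [Real.norm_eq_abs, abs_le]; constructor <;> linarith
  rw [← integral_sub hi1 hi2, norm_mul, Real.norm_of_nonneg hat.le]
  have hb : ‖∫ x in Ioi (0:ℝ), (f (κ t * (lam t * x)) - f (k * (lam t * x))) ∂(ν t)‖
      ≤ ∫ x in Ioi (0:ℝ), (ε / (2 * (m + 1)) * 1 + 2 * M * (1 - chi n (lam t * x))) ∂(ν t) := by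
    refine norm_integral_le_of_norm_le (((integrable_const (1:ℝ)).const_mul _).add (hi3.const_mul _)) ?_
    filter_upwards [ae_restrict_mem measurableSet_Ioi] with x hx
    have hx : 0 < x := hx
    have hy : 0 < lam t * x := by positivity
    rw [Real.norm_eq_abs]
    by_cases hyI : lam t * x ∈ Icc (1 / (n + 1 : ℝ)) (n + 1)
    · have h1 := e3 _ hyI
      have h2 := chi_le n (lam t * x)
      have : 0 ≤ 2 * M * (1 - chi n (lam t * x)) := mul_nonneg (by positivity) (by linarith)
      linarith
    · rw [chi_zero hy hyI]
      have h1 := hM (κ t * (lam t * x)) (by simp only [mem_Ioi]; positivity)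
      have h2 := hM (k * (lam t * x)) (by simp only [mem_Ioi]; positivity)
      have h3 := abs_sub (f (κ t * (lam t * x))) (f (k * (lam t * x)))
      linarith
  rw [integral_add ((integrable_const (1:ℝ)).const_mul _) (hi3.const_mul _), integral_const_mul,
    integral_const_mul] at hb
  set I1 := ∫ x in Ioi (0:ℝ), (1:ℝ) ∂(ν t)
  set I2 := ∫ x in Ioi (0:ℝ), (1 - chi n (lam t * x)) ∂(ν t)
  calc _ ≤ a t * (ε / (2 * (m + 1)) * I1 + 2 * M * I2) := by gcongr
    _ = ε / (2 * (m + 1)) * (a t * I1) + 2 * M * (a t * I2) := by ring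
    _ < ε / (2 * (m + 1)) * (m + 1) + (2 * M + 1) * (ε / (2 * (2 * M + 1))) := by
        have : 2 * M * (a t * I2) ≤ (2 * M + 1) * (ε / (2 * (2 * M + 1))) := by
          have h1 : 2 * M * (a t * I2) ≤ 2 * M * (ε / (2 * (2 * M + 1))) := by gcongr
          linarith
        have h2 := mul_lt_mul_of_pos_left e1 hθ
        linarith
    _ = ε := by field_simp; ring

/-- under the scaling-limit hypotheses for a critical branching
mechanism regularly varying at 0 with index `γ ∈ (1,2]`, there exists
`ρ ∈ (0,1]` such that the solution is asymptotically self-similar: for every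
fixed `t > 0` and every bounded continuous `f` on `(0,∞)`,
`α(s) ∫ f(λ(s)x) ν_{st}(dx) → t^{1/(1-γ)} ∫ f(t^{1/(ρ(γ-1))}x) ν̂(dx)`
as `s → ∞`. -/
theorem asymptotic_self_similarity
    (Ψ : ℝ → ℝ) (β : ℝ) (π : Measure ℝ)
    (hβ : 0 ≤ β)
    (hπfin : ∫⁻ x in Ioi (0:ℝ), ENNReal.ofReal (min x (x ^ 2)) ∂π < ⊤)
    (hΨ : ∀ u : ℝ, 0 < u →
      Ψ u = β * u ^ 2 + ∫ x in Ioi (0:ℝ), (Real.exp (-(u * x)) - 1 + u * x) ∂π)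
    (γ : ℝ) (hγ : 1 < γ ∧ γ ≤ 2)
    (hreg : ∀ x : ℝ, 0 < x →
      Tendsto (fun t => Ψ (t * x) / Ψ t) (nhdsWithin 0 (Ioi 0)) (nhds (x ^ γ)))
    (ν : ℝ → Measure ℝ)
    (hfin : ∀ t : ℝ, 0 < t → IsFiniteMeasure (ν t))
    (hnz : ∀ t : ℝ, 0 < t → ν t (Ioi 0) ≠ 0)
    (hconc : ∀ t : ℝ, 0 < t → ν t (Iic 0) = 0)
    (hode : ∀ q : ℝ, 0 < q → ∀ t : ℝ, 0 < t →
      HasDerivAt (fun u => ∫ x in Ioi (0:ℝ), (1 - Real.exp (-(q * x))) ∂(ν u))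
        (-Ψ (∫ x in Ioi (0:ℝ), (1 - Real.exp (-(q * x))) ∂(ν t))) t)
    (hodeInf : ∀ t : ℝ, 0 < t →
      HasDerivAt (fun u => ((ν u) (Ioi 0)).toReal) (-Ψ (((ν t) (Ioi 0)).toReal)) t)
    (a lam : ℝ → ℝ) (ha : ∀ t : ℝ, 0 < t → 0 < a t) (hlam : ∀ t : ℝ, 0 < t → 0 < lam t)
    (νhat : Measure ℝ) (hνhatfin : IsFiniteMeasure νhat)
    (hνhatnz : νhat (Ioi 0) ≠ 0) (hνhatc : νhat (Iic 0) = 0)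
    (hlim : ∀ f : ℝ → ℝ, ContinuousOn f (Ioi 0) →
      (∃ M : ℝ, ∀ x ∈ Ioi (0:ℝ), |f x| ≤ M) →
      Tendsto (fun t => a t * ∫ x in Ioi (0:ℝ), f (lam t * x) ∂(ν t)) atTop
        (nhds (∫ x in Ioi (0:ℝ), f x ∂νhat))) :
    ∃ ρ : ℝ, 0 < ρ ∧ ρ ≤ 1 ∧
      ∀ t : ℝ, 0 < t →
        ∀ f : ℝ → ℝ, ContinuousOn f (Ioi 0) →
          (∃ M : ℝ, ∀ x ∈ Ioi (0:ℝ), |f x| ≤ M) →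
          Tendsto (fun s => a s * ∫ x in Ioi (0:ℝ), f (lam s * x) ∂(ν (s * t))) atTop
            (nhds (t ^ (1 / (1 - γ)) *
              ∫ x in Ioi (0:ℝ), f (t ^ (1 / (ρ * (γ - 1))) * x) ∂νhat)) := by
  obtain ⟨hΨc, hΨp⟩ := psi_facts Ψ β π hβ hπfin hΨ γ hreg
  obtain ⟨G, hG⟩ := exists_G Ψ hΨc hΨp
  have hanti := G_anti Ψ G hΨp hG
  set η : ℝ → ℝ := fun t => ((ν t) (Ioi 0)).toReal with hη
  have hηp : ∀ t, 0 < t → 0 < η t := fun t ht => by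
    have := hfin t ht
    exact ENNReal.toReal_pos (hnz t ht) (measure_ne_top _ _)
  have hGη : ∀ t, 0 < t → G (η t) = G (η 1) + (t - 1) := fun t ht =>
    G_ode Ψ G hΨp hG η hηp hodeInf 1 t one_pos ht
  have hGηtop : Tendsto (fun t => G (η 1) + (t - 1)) atTop atTop :=
    tendsto_atTop_add_const_left _ _ (tendsto_atTop_add_const_right _ _ tendsto_id)
  have hη0 : Tendsto η atTop (nhdsWithin 0 (Ioi 0)) := by
    rw [tendsto_nhdsWithin_iff]
    refine ⟨?_, ?_⟩
    · rw [tendsto_order]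
      constructor
      · intro b hb
        filter_upwards [eventually_gt_atTop 0] with t ht using hb.trans (hηp t ht)
      · intro b hb
        filter_upwards [eventually_gt_atTop 0, hGηtop.eventually_gt_atTop (G b)] with t ht h1
        rw [← hGη t ht] at h1
        exact (hanti.lt_iff_gt hb (hηp t ht)).1 h1
    · filter_upwards [eventually_gt_atTop 0] with t ht using hηp t ht
  have hGt : Tendsto G (nhdsWithin 0 (Ioi 0)) atTop := by
    rw [tendsto_atTop]
    intro K
    obtain ⟨t, ht, h1⟩ := ((eventually_gt_atTop 0).and (hGηtop.eventually_ge_atTop K)).exists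
    rw [← hGη t ht] at h1
    filter_upwards [Ioo_mem_nhdsGT (hηp t ht)] with v hv
    exact h1.trans (hanti hv.1 (hηp t ht) hv.2).le
  have hrv := G_rv_le Ψ G hΨp hG hGt γ hreg
  set m : ℝ := (νhat (Ioi 0)).toReal with hm
  have hm0 : 0 < m := ENNReal.toReal_pos hνhatnz (measure_ne_top _ _)
  have hmass : Tendsto (fun s => a s * η s) atTop (nhds m) := by
    have := hlim (fun _ => 1) continuousOn_const ⟨1, fun x _ => by simp⟩
    simp only [mass_eq] at this
    exact this
  have hγ1 := hγ.1
  -- asymptotics of G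
  have hGs : Tendsto (fun s => G (η s) / s) atTop (nhds 1) := by
    have h1 : Tendsto (fun s : ℝ => (G (η 1) - 1) / s + 1) atTop (nhds (0 + 1)) :=
      (tendsto_const_nhds.div_atTop tendsto_id).add_const 1
    rw [zero_add] at h1
    refine h1.congr' ?_
    filter_upwards [eventually_gt_atTop 0] with s hs
    rw [hGη s hs]
    field_simp
    ring
  have hlp : ∀ t q, 0 < t → 0 < q → 0 < lapl (ν t) q := fun t q ht hq => by
    have := hfin t ht
    exact lapl_pos _ (hnz t ht) hq
  set h : ℝ → ℝ := fun q => (lapl νhat q / m) ^ (1 - γ) - 1 with hh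
  have key : ∀ q, 0 < q → Tendsto (fun s => G (lapl (ν s) (q * lam s)) / s) atTop
      (nhds (h q + 1)) := by
    intro q hq
    have h1 := hlim (fun x => 1 - Real.exp (-(q * x))) (by fun_prop)
      ⟨1, fun x hx => lapl_fbound hq.le hx⟩
    have h2 : Tendsto (fun s => a s * lapl (ν s) (q * lam s)) atTop (nhds (lapl νhat q)) := by
      simpa only [lapl, mul_assoc] using h1
    have h3 : Tendsto (fun s => lapl (ν s) (q * lam s) / η s) atTop (nhds (lapl νhat q / m)) := by
      refine (h2.div hmass hm0.ne').congr' ?_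
      filter_upwards [eventually_gt_atTop 0] with s hs
      exact mul_div_mul_left _ _ (ha s hs).ne'
    have h4 := (G_rv_unif hanti hGt hrv hη0
      (div_pos (lapl_pos νhat hνhatnz hq) hm0) h3).mul hGs
    have h5 : (lapl νhat q / m) ^ (1 - γ) * 1 = h q + 1 := by simp [hh]
    rw [h5] at h4
    refine h4.congr' ?_
    filter_upwards [(hGt.comp hη0).eventually_gt_atTop 0] with s hs
    exact div_mul_div_cancel₀ hs.ne'
  -- facts on h
  have hquot : ∀ q, 0 < q → 0 < lapl νhat q / m ∧ lapl νhat q / m < 1 := fun q hq =>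
    ⟨div_pos (lapl_pos νhat hνhatnz hq) hm0, by
      rw [div_lt_one hm0]; exact lapl_lt_mass νhat hνhatnz hq.le⟩
  have hhp : ∀ q, 0 < q → 0 < h q := fun q hq => by
    have := Real.one_lt_rpow_of_pos_of_lt_one_of_neg (hquot q hq).1 (hquot q hq).2
      (by linarith : 1 - γ < 0)
    simp only [hh]; linarith
  have hha : StrictAntiOn h (Ioi 0) := by
    intro p hp q hq hpq
    have hp : 0 < p := hp
    have h1 : lapl νhat p / m < lapl νhat q / m :=
      div_lt_div_of_pos_right (lapl_strictMono νhat hνhatnz hp.le hpq) hm0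
    have := Real.rpow_lt_rpow_of_neg (hquot p hp).1 h1 (by linarith : 1 - γ < 0)
    simp only [hh]; linarith
  have hhc : ContinuousOn h (Ioi 0) := by
    refine ContinuousOn.sub (ContinuousOn.rpow_const ?_ ?_) continuousOn_const
    · exact ((lapl_contOn νhat).mono Ioi_subset_Ici_self).div_const m
    · intro q hq
      exact Or.inl (hquot q hq).1.ne'
  have hsurj : ∀ y, 0 < y → ∃ q, 0 < q ∧ h q = y := by
    intro y hy
    set z := (y + 1) ^ (1 / (1 - γ)) with hz
    have hz0 : 0 < z := Real.rpow_pos_of_pos (by linarith) _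
    have hzy : z ^ (1 - γ) = y + 1 := by
      rw [hz, ← Real.rpow_mul (by linarith), one_div, inv_mul_cancel₀ (by linarith), Real.rpow_one]
    have hz1 : z < 1 := Real.rpow_lt_one_of_one_lt_of_neg (by linarith)
      (one_div_neg.2 (by linarith))
    have hzm : z * m < m := by nlinarith
    obtain ⟨Q, hQ, hQ0⟩ := (((lapl_tendsto_mass νhat).eventually (lt_mem_nhds hzm)).and
      (eventually_gt_atTop 0)).exists
    have hiv := intermediate_value_Icc hQ0.le ((lapl_contOn νhat).mono Icc_subset_Ici_self)
    obtain ⟨q, hq, hqe⟩ := hiv ⟨by rw [lapl_zero]; positivity, hQ.le⟩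
    have hq0 : 0 < q := by
      rcases hq.1.lt_or_eq with h1 | h1
      · exact h1
      · rw [← h1, lapl_zero] at hqe
        have : 0 < z * m := by positivity
        linarith
    refine ⟨q, hq0, ?_⟩
    simp only [hh]
    rw [hqe, mul_div_cancel_right₀ _ hm0.ne', hzy]
    ring
  have hst : ∀ t : ℝ, 0 < t → Tendsto (fun s : ℝ => s * t) atTop atTop := fun t ht =>
    tendsto_id.atTop_mul_const ht
  -- limit of lam ratios
  have hκlim : ∀ t q r, 0 < t → 0 < q → 0 < r → h r = t * h q →
      Tendsto (fun s => lam (s * t) / lam s) atTop (nhds (r / q)) := by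
    intro t q r ht hq hr hrq
    have hT := mono_inv (g := fun s p => G (lapl (ν (s * t)) (p * lam s)) / s)
      (H := fun p => h p + t) (κ := fun s => q * (lam (s * t) / lam s)) hr ?_ ?_ ?_ ?_ ?_
    · have := hT.div_const q
      refine this.congr fun s => ?_
      rw [mul_div_cancel_left₀ _ hq.ne']
    · filter_upwards [eventually_gt_atTop 0] with s hs p hp p' hp' hpp
      have := hfin (s * t) (by positivity)
      have hl := hlam s hs
      have hp : 0 < p := hp
      have hp' : 0 < p' := hp'
      have h1 : lapl (ν (s * t)) (p * lam s) ≤ lapl (ν (s * t)) (p' * lam s) := by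
        rcases hpp.lt_or_eq with h2 | h2
        · exact (lapl_strictMono _ (hnz (s * t) (by positivity)) (by positivity)
            (by gcongr)).le
        · rw [h2]
      have h2 := hanti.antitoneOn (hlp (s * t) (p * lam s) (by positivity) (by positivity))
        (hlp (s * t) (p' * lam s) (by positivity) (by positivity)) h1
      simp only
      gcongr
    · filter_upwards [eventually_gt_atTop 0] with s hs
      have := hlam s hs
      have := hlam (s * t) (by positivity)
      positivity
    · intro p hp p' hp' hpp
      have := hha hp hp' hpp
      simp only; linarith
    · intro p hp
      have h1 := (key p hp).add_const (t - 1)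
      have h2 : h p + 1 + (t - 1) = h p + t := by ring
      rw [h2] at h1
      refine h1.congr' ?_
      filter_upwards [eventually_gt_atTop 0] with s hs
      have hl := hlam s hs
      have := G_ode Ψ G hΨp hG (fun u => lapl (ν u) (p * lam s))
        (fun u hu => hlp u _ hu (by positivity)) (fun u hu => hode _ (by positivity) u hu)
        s (s * t) hs (by positivity)
      rw [this]
      field_simp
    · have h1 := ((key q hq).comp (hst t ht)).mul_const t
      have h2 : (h q + 1) * t = h r + t := by rw [hrq]; ring
      rw [h2] at h1
      refine h1.congr' ?_
      filter_upwards [eventually_gt_atTop 0] with s hs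
      have hl := hlam s hs
      simp only [Function.comp]
      have h3 : q * (lam (s * t) / lam s) * lam s = q * lam (s * t) := by field_simp
      rw [h3]
      field_simp
  have hrex : ∀ t, ∃ r, 0 < t → 0 < r ∧ h r = t * h 1 := by
    intro t
    by_cases ht : 0 < t
    · obtain ⟨r, hr, hr'⟩ := hsurj (t * h 1) (mul_pos ht (hhp 1 one_pos))
      exact ⟨r, fun _ => ⟨hr, hr'⟩⟩
    · exact ⟨0, fun h => absurd h ht⟩
  choose r hr using hrex
  have hrlim : ∀ t, 0 < t → Tendsto (fun s => lam (s * t) / lam s) atTop (nhds (r t)) := by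
    intro t ht
    have := hκlim t 1 (r t) ht one_pos (hr t ht).1 (hr t ht).2
    rwa [div_one] at this
  have hrq : ∀ t q, 0 < t → 0 < q → h (q * r t) = t * h q := by
    intro t q ht hq
    obtain ⟨p, hp, hp'⟩ := hsurj (t * h q) (mul_pos ht (hhp q hq))
    have h1 := tendsto_nhds_unique (hrlim t ht) (hκlim t q p ht hq hp hp')
    rw [h1, mul_div_cancel₀ _ hq.ne', hp']
  have h1p := hhp 1 one_pos
  obtain ⟨c, hc, hTc⟩ := mult_power (T := fun q => h q / h 1) (fun q hq => div_pos (hhp q hq) h1p)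
    (hhc.div_const _) (fun p hp q hq hpq => div_lt_div_of_pos_right (hha hp hq hpq) h1p) (by
      intro p q hp hq
      have hTp : 0 < h p / h 1 := div_pos (hhp p hp) h1p
      have h2 : r (h p / h 1) = p := by
        refine hha.injOn (hr _ hTp).1 hp ?_
        rw [(hr _ hTp).2, div_mul_cancel₀ _ h1p.ne']
      have h3 := hrq _ q hTp hq
      rw [h2] at h3
      rw [mul_comm p q, h3]
      field_simp)
  have hrt : ∀ t, 0 < t → (r t)⁻¹ = t ^ (1 / c) := by
    intro t ht
    have h2 := hTc (r t) (hr t ht).1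
    rw [(hr t ht).2, mul_div_cancel_right₀ _ h1p.ne'] at h2
    have h3 : t ^ (1 / c) = (r t ^ (-c)) ^ (1 / c) := by rw [← h2]
    rw [h3, ← Real.rpow_mul (hr t ht).1.le, neg_mul, mul_one_div_cancel hc.ne', Real.rpow_neg_one]
  have hcle : c ≤ γ - 1 := by
    by_contra! hcon
    set d := c - (γ - 1) with hd
    have hd0 : 0 < d := by linarith
    set e := h 1 / (2 * (1 + h 1)) with he
    have he0 : 0 < e := by positivity
    have he1 : e ≤ 1 := by rw [he, div_le_one (by positivity)]; linarith
    set q := e ^ (1 / d) with hq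
    have hq0 : 0 < q := Real.rpow_pos_of_pos he0 _
    have hq1 : q ≤ 1 := Real.rpow_le_one he0.le he1 (by positivity)
    have hqd : q ^ d = e := by
      rw [hq, ← Real.rpow_mul he0.le, one_div, inv_mul_cancel₀ hd0.ne', Real.rpow_one]
    have e1 : h q = h 1 * q ^ (-c) := by
      rw [← hTc q hq0]; field_simp
    have e2 : q * (lapl νhat 1 / m) ≤ lapl νhat q / m := by
      rw [← mul_div_assoc]
      exact div_le_div_of_nonneg_right (lapl_concave νhat hq0.le hq1) hm0.le
    have e3 : (lapl νhat q / m) ^ (1 - γ) ≤ (q * (lapl νhat 1 / m)) ^ (1 - γ) :=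
      Real.rpow_le_rpow_of_nonpos (mul_pos hq0 (hquot 1 one_pos).1) e2 (by linarith)
    rw [Real.mul_rpow hq0.le (hquot 1 one_pos).1.le] at e3
    have e4 : (lapl νhat 1 / m) ^ (1 - γ) = 1 + h 1 := by simp [hh]
    have e5 : (lapl νhat q / m) ^ (1 - γ) = 1 + h q := by simp [hh]
    rw [e4, e5, e1] at e3
    have e6 : q ^ (1 - γ) = q ^ d * q ^ (-c) := by
      rw [← Real.rpow_add hq0]; congr 1; rw [hd]; ring
    rw [e6, hqd] at e3
    have e7 : e * (1 + h 1) = h 1 / 2 := by rw [he]; field_simp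
    have e8 : 0 < q ^ (-c) := Real.rpow_pos_of_pos hq0 _
    have e9 : e * q ^ (-c) * (1 + h 1) = h 1 / 2 * q ^ (-c) := by rw [← e7]; ring
    rw [e9] at e3
    nlinarith [mul_pos h1p e8]
  have hγ0 : 0 < γ - 1 := by linarith
  refine ⟨c / (γ - 1), by positivity, by rw [div_le_one hγ0]; exact hcle, ?_⟩
  intro t ht f hf hfb
  rw [div_mul_cancel₀ _ hγ0.ne', ← hrt t ht]
  -- amplitude
  have hηratio : Tendsto (fun s => η (s * t) / η s) atTop (nhds (t ^ (1 / (1 - γ)))) := by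
    refine G_rv_inv hanti hGt hγ1 hrv hη0 ?_ ht ?_
    · filter_upwards [eventually_gt_atTop 0] with s hs using hηp _ (by positivity)
    · have h1 := ((hGs.comp (hst t ht)).mul_const t).div hGs one_ne_zero
      rw [one_mul, div_one] at h1
      refine h1.congr' ?_
      filter_upwards [eventually_gt_atTop 0, (hGt.comp hη0).eventually_gt_atTop 0] with s hs hs'
      simp only [Function.comp, Pi.div_apply] at hs' ⊢
      field_simp
  have hamp : Tendsto (fun s => a s / a (s * t)) atTop (nhds (t ^ (1 / (1 - γ)))) := by
    have h1 := (hmass.div (hmass.comp (hst t ht)) hm0.ne').mul hηratio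
    rw [div_self hm0.ne', one_mul] at h1
    refine h1.congr' ?_
    filter_upwards [eventually_gt_atTop 0] with s hs
    have e1 := ha s hs
    have e2 := ha (s * t) (by positivity)
    have e3 := hηp s hs
    have e4 := hηp (s * t) (by positivity)
    simp only [Function.comp, Pi.div_apply]
    field_simp
  have hκ' : Tendsto (fun u => lam (u / t) / lam u) atTop (nhds (r t)⁻¹) := by
    have h1 : Tendsto (fun u : ℝ => u / t) atTop atTop := tendsto_id.atTop_div_const ht
    have h2 := ((hrlim t ht).comp h1).inv₀ (hr t ht).1.ne'
    refine h2.congr fun u => ?_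
    simp only [Function.comp]
    rw [div_mul_cancel₀ _ ht.ne', inv_div]
  have hmw := moving_weak ν hfin a lam ha hlam νhat hlim f hf hfb (fun u => lam (u / t) / lam u)
    (fun u hu => div_pos (hlam _ (by positivity)) (hlam u hu)) (r t)⁻¹
    (inv_pos.2 (hr t ht).1) hκ'
  refine (hamp.mul (hmw.comp (hst t ht))).congr' ?_
  filter_upwards [eventually_gt_atTop 0] with s hs
  have e2 := ha (s * t) (by positivity)
  have e3 := hlam (s * t) (by positivity)
  simp only [Function.comp]
  have h5 : ∀ x, lam (s * t / t) / lam (s * t) * (lam (s * t) * x) = lam s * x := by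
    intro x
    rw [mul_div_cancel_right₀ _ ht.ne']
    field_simp
  simp only [h5]
  rw [← mul_assoc, div_mul_cancel₀ _ e2.ne']
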